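/- Let G be a finite group with normal subgroups M ≅ SL(2,5) and C = C_G(M) such that G = MC and T = M ∩ C = Z(M) ≅ C₂. If the unique non-trivial character λ of T extends to a linear character of C, then every ψ ∈ Irr(M) lying over λ with ψ(1) ∈ {2,4} has all its extensions to characters of G over λ being primitive, and in particular G has at least 2·n₁(G/M) primitive irreducible characters of degree 2 and at least n₁(G/M) primitive irreducible characters of degree 4 not containing T in their kernel. -/

import Mathlib

open CategoryTheory BigOperators
open scoped Classical

noncomputable section

/-- `χ` is an irreducible complex character of the finite group `G`. -/
def IsIrrChar {G : Type} [Group G] [Fintype G] (χ : G → ℂ) : Prop :=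
  ∃ V : FDRep ℂ G, Simple V ∧ χ = V.character

/-- The class function on `G` induced from the function `η` on the subgroup `H`. -/
def indChar {G : Type} [Group G] [Fintype G] (H : Subgroup G) (η : H → ℂ) : G → ℂ :=
  fun g => (Fintype.card H : ℂ)⁻¹ *
    ∑ x : G, if h : x⁻¹ * g * x ∈ H then η ⟨x⁻¹ * g * x, h⟩ else 0

/-- `χ` is monomial: induced from a linear character of some subgroup. -/
def IsMonomial {G : Type} [Group G] [Fintype G] (χ : G → ℂ) : Prop :=
  ∃ (H : Subgroup G) (η : H →* ℂ), χ = indChar H fun h => η h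

/-- `χ` is primitive: not induced from an (irreducible) character of a proper subgroup. -/
def IsPrimitive {G : Type} [Group G] [Fintype G] (χ : G → ℂ) : Prop :=
  ¬ ∃ (H : Subgroup G), H ≠ ⊤ ∧ ∃ η : H → ℂ, IsIrrChar η ∧ χ = indChar H η

/-- The usual hermitian inner product of class functions. -/
def charInner {H : Type} [Group H] [Fintype H] (α β : H → ℂ) : ℂ :=
  (Fintype.card H : ℂ)⁻¹ * ∑ h, α h * (starRingEnd ℂ) (β h)

/-! If a subgroup `H` induces a character `χ` of degree less than `p`, then `H` has index less than
`p` and so contains the elements of order `p`, which generate `M ≅ SL(2, p)`. As `C` centralizes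
`M ≤ H`, the restriction of `χ` to `M` is then `[G : H]` times a character, so that it is reducible
unless `H = G`. This gives primitivity.

A character of `M` over `λ` extends to `G` as soon as `λ` extends to `C`, and twisting the extension
by the linear characters of `G / M` gives `n₁(G / M)` different ones. It remains to exhibit
characters of `SL(2, 5)` that are odd, i.e. on which `-1` acts as `-1`. Those of degree two are the
odd parts of the two Weil representations on functions on `ZMod 5`, told apart by their traces,
which are quadratic Gauss sums; one of degree four is the symmetric cube of either. -/

section IrreducibleCharacters

variable {G : Type} [Group G] [Fintype G]

theorem isIrrChar_character_iff_finrank {V : Type} [AddCommGroup V] [Module ℂ V]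
    [FiniteDimensional ℂ V] (ρ : Representation ℂ G V) :
    IsIrrChar ρ.character ↔ Module.finrank ℂ (ρ.IntertwiningMap ρ) = 1 := by
  have hcard : (Nat.card G : ℂ) ≠ 0 := Nat.cast_ne_zero.mpr Nat.card_pos.ne'
  have : Invertible (Nat.card G : ℂ) := invertibleOfNonzero hcard
  have hnorm := Representation.card_inv_mul_sum_char_mul_char_eq_finrank (σ := ρ) (ρ := ρ)
  have hsimple (W : FDRep ℂ G) (hW : ρ.character = W.character) :
      Simple W ↔ Module.finrank ℂ (ρ.IntertwiningMap ρ) = 1 := by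
    rw [FDRep.simple_iff_char_is_norm_one, ← hW, ← Nat.cast_inj (R := ℂ), ← hnorm]
    rw [inv_mul_eq_iff_eq_mul₀ hcard, Nat.cast_one, mul_one]
  constructor
  · rintro ⟨W, hW, h⟩
    exact (hsimple W h).mp hW
  · intro h
    exact ⟨FDRep.of ρ, (hsimple _ rfl).mpr h, rfl⟩

theorem isIrrChar_character_iff {V : Type} [AddCommGroup V] [Module ℂ V]
    [FiniteDimensional ℂ V] (ρ : Representation ℂ G V) :
    IsIrrChar ρ.character ↔
      Nontrivial V ∧ ∀ f : Module.End ℂ V, (∀ g, Commute f (ρ g)) → ∃ c : ℂ, f = c • 1 := by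
  rw [isIrrChar_character_iff_finrank]
  have id_ne_zero [Nontrivial V] : Representation.IntertwiningMap.id ρ ≠ 0 := fun h =>
    one_ne_zero (α := Module.End ℂ V) (congrArg (·.toLinearMap) h)
  constructor
  · intro hrank
    obtain ⟨f, hf, -⟩ := finrank_eq_one_iff'.mp hrank
    have : Nontrivial V := by
      by_contra hV
      rw [not_nontrivial_iff_subsingleton] at hV
      exact hf (Representation.IntertwiningMap.ext (Subsingleton.elim _ _))
    refine ⟨this, fun f hf => ?_⟩
    obtain ⟨c, hc⟩ := (finrank_eq_one_iff_of_nonzero' _ id_ne_zero).mp hrank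
      ⟨f, fun g => hf g⟩
    exact ⟨c, congrArg (·.toLinearMap) hc.symm⟩
  · rintro ⟨hV, hscalar⟩
    refine (finrank_eq_one_iff_of_nonzero' _ id_ne_zero).mpr fun f => ?_
    obtain ⟨c, hc⟩ := hscalar f.toLinearMap f.isIntertwining'
    exact ⟨c, Representation.IntertwiningMap.ext hc.symm⟩

theorem IsIrrChar.exists_representation {χ : G → ℂ} (hχ : IsIrrChar χ) :
    ∃ (V : Type) (_ : AddCommGroup V) (_ : Module ℂ V) (_ : FiniteDimensional ℂ V)
      (ρ : Representation ℂ G V), χ = ρ.character := by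
  obtain ⟨V, -, rfl⟩ := hχ
  exact ⟨V, inferInstance, inferInstance, inferInstance, V.ρ, rfl⟩

theorem IsIrrChar.exists_apply_one_eq_natCast {χ : G → ℂ} (hχ : IsIrrChar χ) :
    ∃ n : ℕ, 0 < n ∧ χ 1 = n := by
  obtain ⟨V, _, _, _, ρ, rfl⟩ := hχ.exists_representation
  have : Nontrivial V := ((isIrrChar_character_iff ρ).mp hχ).1
  exact ⟨_, Module.finrank_pos, ρ.char_one⟩

theorem IsIrrChar.eq_one_of_eq_nsmul {χ : G → ℂ} (hχ : IsIrrChar χ) {k : ℕ}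
    {V : Type} [AddCommGroup V] [Module ℂ V] [FiniteDimensional ℂ V]
    {σ : Representation ℂ G V} (h : χ = k • σ.character) : k = 1 := by
  have : Invertible (Nat.card G : ℂ) :=
    invertibleOfNonzero (Nat.cast_ne_zero.mpr Nat.card_pos.ne')
  obtain ⟨W, _, _, _, ρ, rfl⟩ := hχ.exists_representation
  have hρ := Representation.card_inv_mul_sum_char_mul_char_eq_finrank (σ := ρ) (ρ := ρ)
  have hσ := Representation.card_inv_mul_sum_char_mul_char_eq_finrank (σ := σ) (ρ := σ)
  have hnorm : (k ^ 2 * Module.finrank ℂ (σ.IntertwiningMap σ) : ℂ) = 1 := by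
    rw [← hσ, ← Nat.cast_one, ← (isIrrChar_character_iff_finrank ρ).mp hχ, ← hρ, h]
    simp only [Pi.smul_apply, nsmul_eq_mul, Finset.mul_sum]
    exact Finset.sum_congr rfl fun g _ => by ring
  have hdvd : k ^ 2 * Module.finrank ℂ (σ.IntertwiningMap σ) = 1 := by exact_mod_cast hnorm
  exact (Nat.pow_eq_one.mp (Nat.eq_one_of_mul_eq_one_right hdvd)).resolve_right two_ne_zero

theorem IsIrrChar.comp_mulEquiv {H : Type} [Group H] [Fintype H] {χ : G → ℂ} (hχ : IsIrrChar χ)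
    (e : H ≃* G) : IsIrrChar (χ ∘ e) := by
  obtain ⟨V, _, _, _, ρ, rfl⟩ := hχ.exists_representation
  obtain ⟨hV, hscalar⟩ := (isIrrChar_character_iff ρ).mp hχ
  let σ : Representation ℂ H V := ρ.comp e.toMonoidHom
  exact (isIrrChar_character_iff σ).mpr
    ⟨hV, fun f hf => hscalar f fun g => e.apply_symm_apply g ▸ hf (e.symm g)⟩

end IrreducibleCharacters

section Primitivity

variable {G : Type} [Group G] [Fintype G]

theorem indChar_apply_eq_index_mul (H : Subgroup G) (η : H → ℂ) {g : G} {a : ℂ}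
    (hg : ∀ x : G, ∃ h : x⁻¹ * g * x ∈ H, η ⟨x⁻¹ * g * x, h⟩ = a) :
    indChar H η g = H.index * a := by
  have hsummand (x : G) :
      (if h : x⁻¹ * g * x ∈ H then η ⟨x⁻¹ * g * x, h⟩ else 0) = a := by
    obtain ⟨hx, hη⟩ := hg x
    rw [dif_pos hx, hη]
  have hcard : (Fintype.card G : ℂ) = Fintype.card H * H.index := by
    rw [← Nat.card_eq_fintype_card, ← Nat.card_eq_fintype_card, ← Nat.cast_mul,
      H.card_mul_index]
  simp only [indChar, hsummand, Finset.sum_const, Finset.card_univ, nsmul_eq_mul, hcard]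
  have : (Fintype.card H : ℂ) ≠ 0 := Nat.cast_ne_zero.mpr Fintype.card_ne_zero
  field_simp

theorem indChar_one (H : Subgroup G) (η : H → ℂ) : indChar H η 1 = H.index * η 1 :=
  indChar_apply_eq_index_mul H η fun x => by
    simp only [mul_one, inv_mul_cancel]
    exact ⟨H.one_mem, rfl⟩

end Primitivity

section CentralProduct

variable {G : Type} [Group G] {M C : Subgroup G}

/-- `G` is the internal central product of `M` and `C`: these subgroups generate `G` and commute
elementwise, so they may intersect in a central subgroup. -/
structure IsCentralProduct (M C : Subgroup G) : Prop where
  commute (m : M) (c : C) : Commute (m : G) c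
  sup_eq_top : M ⊔ C = ⊤

namespace IsCentralProduct

/-- The multiplication map `M × C → G` of a central product, as a homomorphism. -/
def mulHom (hMC : IsCentralProduct M C) : M × C →* G :=
  M.subtype.noncommCoprod C.subtype fun m c => hMC.commute m c

theorem mulHom_apply (hMC : IsCentralProduct M C) (m : M) (c : C) :
    hMC.mulHom (m, c) = m * c :=
  rfl

theorem mulHom_surjective (hMC : IsCentralProduct M C) : Function.Surjective hMC.mulHom := by
  refine MonoidHom.range_eq_top.mp ((M.subtype.noncommCoprod_range C.subtype _).trans ?_)
  rw [M.range_subtype, C.range_subtype, hMC.sup_eq_top]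

theorem isPrimitive_of_isIrrChar_restrict [Fintype G] (hMC : IsCentralProduct M C)
    {χ : G → ℂ} {n : ℕ} (hindex : ∀ K : Subgroup M, K.index ≤ n → K = ⊤)
    (hχ : IsIrrChar fun m : M => χ m) (hdeg : χ 1 = n) : IsPrimitive χ := by
  rintro ⟨H, hH, η, hη, rfl⟩
  obtain ⟨k, hk, hηk⟩ := hη.exists_apply_one_eq_natCast
  have hdegree : H.index * k = n := by
    rw [indChar_one, hηk] at hdeg
    exact_mod_cast hdeg
  have hMH : M ≤ H := by
    refine Subgroup.subgroupOf_eq_top.mp (hindex _ ?_)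
    calc H.relIndex M ≤ H.relIndex ⊤ :=
          Subgroup.relIndex_le_of_le_right le_top (H.relIndex_top_right ▸ H.index_ne_zero_of_finite)
      _ = H.index := H.relIndex_top_right
      _ ≤ n := hdegree ▸ Nat.le_mul_of_pos_right _ hk
  obtain ⟨V, _, _, _, σ, rfl⟩ := hη.exists_representation
  have hrestrict (m : M) : indChar H σ.character m = H.index * σ.character ⟨m, hMH m.2⟩ := by
    refine indChar_apply_eq_index_mul H _ fun x => ?_
    obtain ⟨⟨m', c⟩, hx⟩ := hMC.mulHom_surjective x
    have hconj : x⁻¹ * m * x = (m' : G)⁻¹ * m * m' :=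
      calc x⁻¹ * m * x = (c : G)⁻¹ * ((m' : G)⁻¹ * m * m') * c := by
            rw [← hx, hMC.mulHom_apply]
            group
        _ = (m' : G)⁻¹ * m * m' := (hMC.commute (m'⁻¹ * m * m') c).symm.inv_mul_cancel
    simp only [hconj]
    refine ⟨hMH (m'⁻¹ * m * m').2, ?_⟩
    have := σ.char_conj ⟨m, hMH m.2⟩ ⟨m', hMH m'.2⟩⁻¹
    rwa [inv_inv] at this
  refine hH (Subgroup.index_eq_one.mp (hχ.eq_one_of_eq_nsmul (k := H.index)
    (σ := σ.comp (Subgroup.inclusion hMH)) (funext fun m => ?_)))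
  rw [hrestrict, Pi.smul_apply, nsmul_eq_mul]
  rfl

theorem exists_monoidHom_mul (hMC : IsCentralProduct M C) {A : Type*} [Monoid A]
    (ρ : M →* A) (τ : C →* A) (hcomm : ∀ m c, Commute (ρ m) (τ c))
    (hagree : ∀ (g : G) (hM : g ∈ M) (hC : g ∈ C), ρ ⟨g, hM⟩ = τ ⟨g, hC⟩) :
    ∃ σ : G →* A, ∀ (m : M) (c : C), σ (m * c) = ρ m * τ c := by
  have hker : hMC.mulHom.ker ≤ (ρ.noncommCoprod τ hcomm).ker := by
    rintro ⟨m, c⟩ hmc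
    have hm : (m : G) = (c⁻¹ : C) := eq_inv_of_mul_eq_one_left hmc
    have hρτ : ρ m = τ c⁻¹ :=
      (hagree m m.2 (hm ▸ (c⁻¹).2)).trans (congrArg τ (Subtype.ext hm))
    rw [MonoidHom.mem_ker, MonoidHom.noncommCoprod_apply, hρτ, ← map_mul, inv_mul_cancel, map_one]
  let quotientEquiv := QuotientGroup.quotientKerEquivOfSurjective hMC.mulHom hMC.mulHom_surjective
  refine ⟨(QuotientGroup.lift hMC.mulHom.ker _ hker).comp quotientEquiv.symm, fun m c => ?_⟩
  have : quotientEquiv.symm (m * c) = QuotientGroup.mk (m, c) :=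
    quotientEquiv.symm_apply_eq.mpr rfl
  rw [MonoidHom.comp_apply, MonoidHom.coe_coe, this, QuotientGroup.lift_mk,
    MonoidHom.noncommCoprod_apply]

theorem exists_isIrrChar_mul [Fintype G] (hMC : IsCentralProduct M C) {ψ : M → ℂ}
    (hψ : IsIrrChar ψ) (ν : C →* ℂ)
    (hagree : ∀ (t : G) (hM : t ∈ M) (hC : t ∈ C), ψ ⟨t, hM⟩ = ψ 1 * ν ⟨t, hC⟩) :
    ∃ χ : G → ℂ, IsIrrChar χ ∧ ∀ (m : M) (c : C), χ (m * c) = ψ m * ν c := by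
  obtain ⟨V, _, _, _, ρ, rfl⟩ := hψ.exists_representation
  obtain ⟨hV, hscalar⟩ := (isIrrChar_character_iff ρ).mp hψ
  have hρT (t : G) (hM : t ∈ M) (hC : t ∈ C) : ρ ⟨t, hM⟩ = ν ⟨t, hC⟩ • 1 := by
    obtain ⟨a, ha⟩ := hscalar (ρ ⟨t, hM⟩) fun m =>
      Commute.map (show Commute ⟨t, hM⟩ m from Subtype.ext (hMC.commute m ⟨t, hC⟩).symm) ρ
    have hdim : (Module.finrank ℂ V : ℂ) ≠ 0 := Nat.cast_ne_zero.mpr Module.finrank_pos.ne'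
    have htrace := hagree t hM hC
    rw [ρ.char_one, Representation.character, ha, map_smul, LinearMap.trace_one, smul_eq_mul,
      mul_comm, mul_right_inj' hdim] at htrace
    rw [ha, htrace]
  obtain ⟨σ, hσ⟩ := hMC.exists_monoidHom_mul ρ
    ((algebraMap ℂ (Module.End ℂ V)).toMonoidHom.comp ν)
    (fun m c => (Algebra.commutes (ν c) (ρ m)).symm)
    (fun t hM hC => by
      rw [hρT t hM hC]
      exact (Algebra.algebraMap_eq_smul_one _).symm)
  have hσM (m : M) : σ m = ρ m := by simpa using hσ m 1
  refine ⟨Representation.character σ, (isIrrChar_character_iff σ).mpr ⟨hV, fun f hf => ?_⟩,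
    fun m c => ?_⟩
  · exact hscalar f fun m => hσM m ▸ hf m
  · rw [Representation.character, hσ]
    simp [Representation.character, Algebra.algebraMap_eq_smul_one, mul_comm]

theorem quotient_monoidHom_ext [M.Normal] (hMC : IsCentralProduct M C) {A : Type*} [Monoid A]
    {β β' : (G ⧸ M) →* A} (h : ∀ c : C, β (c : G) = β' (c : G)) : β = β' := by
  refine MonoidHom.ext fun x => ?_
  obtain ⟨g, rfl⟩ := QuotientGroup.mk_surjective x
  obtain ⟨⟨m, c⟩, rfl⟩ := hMC.mulHom_surjective g
  have hm : ((m : G) : G ⧸ M) = 1 := (QuotientGroup.eq_one_iff _).mpr m.2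
  rw [hMC.mulHom_apply, QuotientGroup.mk_mul, hm, one_mul, h]

theorem card_mul_card_quotient_chars_le [Fintype G] [M.Normal] (hMC : IsCentralProduct M C)
    (μ : C →* ℂ) {I : Finset (M → ℂ)} {S : Finset (G → ℂ)} (hI : ∀ ψ ∈ I, IsIrrChar ψ)
    (hagree : ∀ ψ ∈ I, ∀ (t : G) (hM : t ∈ M) (hC : t ∈ C), ψ ⟨t, hM⟩ = ψ 1 * μ ⟨t, hC⟩)
    (hS : ∀ χ : G → ℂ, IsIrrChar χ → (fun m : M => χ m) ∈ I → χ ∈ S) :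
    I.card * Nat.card ((G ⧸ M) →* ℂ) ≤ S.card := by
  let twist (β : (G ⧸ M) →* ℂ) : C →* ℂ := μ * β.comp ((QuotientGroup.mk' M).comp C.subtype)
  have hext (p : I × ((G ⧸ M) →* ℂ)) : ∃ χ : G → ℂ, IsIrrChar χ ∧
      ∀ (m : M) (c : C), χ (m * c) = p.1.1 m * twist p.2 c := by
    refine hMC.exists_isIrrChar_mul (hI _ p.1.2) (twist p.2) fun t hM hC => ?_
    have : (t : G ⧸ M) = 1 := (QuotientGroup.eq_one_iff t).mpr hM
    rw [hagree _ p.1.2 t hM hC]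
    simp [twist, this]
  choose χ hχ hχmul using hext
  have hχM (p) (m : M) : χ p m = p.1.1 m := by simpa using hχmul p m 1
  have hχC (p) (c : C) : χ p c = p.1.1 1 * (μ c * p.2 (c : G)) := by
    simpa [twist] using hχmul p 1 c
  have hχS (p) : χ p ∈ S := hS _ (hχ p) (by simp only [hχM, p.1.2])
  have hinj : Function.Injective fun p => (⟨χ p, hχS p⟩ : S) := by
    rintro ⟨ψ, β⟩ ⟨ψ', β'⟩ heq
    replace heq : χ (ψ, β) = χ (ψ', β') := congrArg Subtype.val heq
    have hψ : ψ = ψ' := Subtype.ext (funext fun m => by rw [← hχM (ψ, β), heq, hχM])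
    subst hψ
    refine Prod.ext rfl (hMC.quotient_monoidHom_ext fun c => ?_)
    obtain ⟨n, hn, hψn⟩ := (hI ψ ψ.2).exists_apply_one_eq_natCast
    have hψ : ψ.1 1 ≠ 0 := hψn ▸ Nat.cast_ne_zero.mpr hn.ne'
    have hμ : μ c ≠ 0 := ((Group.isUnit c).map μ).ne_zero
    have hβ := hχC (ψ, β) c
    rw [heq, hχC, mul_right_inj' hψ, mul_right_inj' hμ] at hβ
    exact hβ.symm
  simpa [Nat.card_prod] using Nat.card_le_card_of_injective _ hinj

end IsCentralProduct

end CentralProduct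

section SpecialLinearGroup

open Matrix.SpecialLinearGroup

theorem mem_of_pow_prime_eq_one_of_index_lt {G : Type*} [Group G] {p : ℕ} (hp : p.Prime)
    {H : Subgroup G} [H.FiniteIndex] (hH : H.index < p) {g : G} (hg : g ^ p = 1) : g ∈ H := by
  obtain ⟨k, hk, hkle, hmem⟩ := H.exists_pow_mem_of_index_ne_zero H.index_ne_zero_of_finite g
  have hcoprime : k.Coprime p := (Nat.coprime_of_lt_prime hk.ne' (hkle.trans_lt hH) hp).symm
  obtain ⟨l, hl⟩ := exists_pow_eq_self_of_coprime
    (hcoprime.coprime_dvd_right (orderOf_dvd_of_pow_eq_one hg))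
  exact hl ▸ H.pow_mem hmem l

theorem transvection_pow {n : Type*} [DecidableEq n] [Fintype n] {R : Type*} [CommRing R]
    {i j : n} (hij : i ≠ j) (c : R) (k : ℕ) :
    transvection hij c ^ k = transvection hij (k * c) := by
  induction k with
  | zero => simp
  | succ k ih => rw [pow_succ, ih, ← transvection_add, Nat.cast_succ, add_one_mul]

theorem eq_top_of_index_lt_of_mulEquiv_SL2 {p : ℕ} [Fact p.Prime] {M : Type*} [Group M]
    (e : M ≃* Matrix.SpecialLinearGroup (Fin 2) (ZMod p)) {K : Subgroup M}
    (hK : K.index < p) : K = ⊤ := by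
  have : Finite M := Finite.of_equiv _ e.symm.toEquiv
  rw [Subgroup.eq_top_iff']
  suffices ∀ A, e.symm A ∈ K from fun m => e.symm_apply_apply m ▸ this (e m)
  refine Matrix.SL2.transvection_induction _ (fun i j hij c => ?_) fun A B hA hB => ?_
  · refine mem_of_pow_prime_eq_one_of_index_lt Fact.out hK ?_
    rw [← map_pow, transvection_pow, CharP.cast_eq_zero, zero_mul,
      transvection_coeff_zero, map_one]
  · exact map_mul e.symm A B ▸ K.mul_mem hA hB

theorem eq_one_or_eq_neg_one_of_mem_center_SL2 {R : Type*} [CommRing R] [IsDomain R]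
    {A : Matrix.SpecialLinearGroup (Fin 2) R} (hA : A ∈ Subgroup.center _) :
    A = 1 ∨ A = -1 := by
  obtain ⟨r, hr, hrA⟩ := mem_center_iff.mp hA
  rw [Fintype.card_fin, sq_eq_one_iff] at hr
  rcases hr with rfl | rfl
  · exact .inl (Subtype.ext (by rw [← hrA, map_one, coe_one]))
  · exact .inr (Subtype.ext (by
      rw [← hrA, map_neg, map_one, coe_neg,
        coe_one]))

/-- The Weyl element `!![0, 1; -1, 0]` of `SL(2, R)`. -/
def weylElement (R : Type*) [CommRing R] : Matrix.SpecialLinearGroup (Fin 2) R :=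
  ⟨!![0, 1; -1, 0], by simp⟩

theorem coe_weylElement (R : Type*) [CommRing R] :
    (weylElement R : Matrix (Fin 2) (Fin 2) R) = !![0, 1; -1, 0] := rfl

theorem transvection_one_zero_eq_weylElement_mul {R : Type*} [CommRing R] (t : R) :
    (transvection one_ne_zero t : Matrix.SpecialLinearGroup (Fin 2) R) =
      weylElement R * transvection zero_ne_one (-t) *
        (weylElement R * weylElement R * weylElement R) := by
  ext i j
  fin_cases i <;> fin_cases j <;>
    simp [coe_weylElement, transvection_coe, Matrix.vecMul_eq_sum]

@[elab_as_elim]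
theorem SL2_induction {F : Type*} [Field F] {P : Matrix.SpecialLinearGroup (Fin 2) F → Prop}
    (upper : ∀ t, P (transvection zero_ne_one t)) (weyl : P (weylElement F))
    (mul : ∀ A B, P A → P B → P (A * B)) (A : Matrix.SpecialLinearGroup (Fin 2) F) : P A := by
  refine Matrix.SL2.transvection_induction P (fun i j hij t => ?_) mul A
  have hlower : P (transvection one_ne_zero t) := transvection_one_zero_eq_weylElement_mul t ▸
    mul _ _ (mul _ _ weyl (upper _)) (mul _ _ (mul _ _ weyl weyl) weyl)
  match i, j, hij with
  | 0, 1, _ => exact upper t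
  | 1, 0, _ => exact hlower
  | 0, 0, h | 1, 1, h => exact absurd rfl h

end SpecialLinearGroup

section MatrixRepresentations

variable {G : Type} [Group G] [Fintype G] {ι : Type} [Fintype ι] [DecidableEq ι]

theorem isIrrChar_trace [Nonempty ι] {ρ : G →* Matrix ι ι ℂ}
    (hρ : ∀ A : Matrix ι ι ℂ, (∀ g, Commute A (ρ g)) → ∃ c : ℂ, A = c • 1) :
    IsIrrChar fun g => (ρ g).trace := by
  let toEnd : Matrix ι ι ℂ ≃ₐ[ℂ] Module.End ℂ (ι → ℂ) := Matrix.toLinAlgEquiv'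
  let σ : Representation ℂ G (ι → ℂ) := (toEnd : Matrix ι ι ℂ →* Module.End ℂ (ι → ℂ)).comp ρ
  have hσ : (fun g => (ρ g).trace) = σ.character :=
    funext fun g => (Matrix.trace_toLin'_eq (ρ g)).symm
  rw [hσ, isIrrChar_character_iff]
  refine ⟨inferInstance, fun f hf => ?_⟩
  obtain ⟨c, hc⟩ := hρ (toEnd.symm f) fun g => by
    have := (hf g).map toEnd.symm
    rwa [show σ g = toEnd (ρ g) from rfl, toEnd.symm_apply_apply] at this
  refine ⟨c, ?_⟩
  rw [← toEnd.apply_symm_apply f, hc, map_smul, map_one]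

/-- Commuting with a diagonal matrix with distinct entries makes a matrix diagonal; commuting with
a matrix with a row without zeros then makes its diagonal constant. -/
theorem isIrrChar_trace_of_diagonal {ρ : G →* Matrix ι ι ℂ} {u w : G} {d : ι → ℂ}
    (hu : ρ u = Matrix.diagonal d) (hd : Function.Injective d)
    {i : ι} (hw : ∀ j, ρ w i j ≠ 0) : IsIrrChar fun g => (ρ g).trace := by
  have : Nonempty ι := ⟨i⟩
  refine isIrrChar_trace fun A hA => ⟨A i i, ?_⟩
  have hoff {j k : ι} (hjk : j ≠ k) : A j k = 0 := by
    have := congrFun₂ (hA u) j k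
    rw [hu, Matrix.mul_diagonal, Matrix.diagonal_mul, mul_comm] at this
    exact (mul_eq_mul_right_iff.mp this).resolve_left fun h => hjk (hd h.symm)
  have hdiag : A = Matrix.diagonal A.diag := by
    ext j k
    rcases eq_or_ne j k with rfl | hjk
    · rw [Matrix.diagonal_apply_eq, Matrix.diag_apply]
    · rw [Matrix.diagonal_apply_ne _ hjk, hoff hjk]
  have hconst (j : ι) : A j j = A i i := by
    have := congrFun₂ (hA w) i j
    rw [hdiag, Matrix.mul_diagonal, Matrix.diagonal_mul, mul_comm] at this
    exact mul_left_cancel₀ (hw j) this.symm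
  rw [hdiag, ← Matrix.diagonal_one, ← Matrix.diagonal_smul]
  exact congrArg _ (funext fun j => by simpa using hconst j)

end MatrixRepresentations

section QuadraticGaussSums

variable (F : Type) [Field F] [Fintype F] [DecidableEq F]

/-- The quadratic character of a finite field, with complex values. -/
def complexQuadraticChar : MulChar F ℂ :=
  (quadraticChar F).ringHomComp (Int.castRingHom ℂ)

local notation "η" => complexQuadraticChar F

variable {F}

theorem isQuadratic_complexQuadraticChar : (η).IsQuadratic :=
  (quadraticChar_isQuadratic F).comp _

theorem complexQuadraticChar_ne_one (hF : ringChar F ≠ 2) : η ≠ 1 := fun h =>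
  quadraticChar_ne_one hF <| (MulChar.ringHomComp_eq_one_iff Int.cast_injective).mp h

theorem sum_addChar_mul_sq (hF : ringChar F ≠ 2) {e : AddChar F ℂ} (he : e.IsPrimitive) {t : F}
    (ht : t ≠ 0) : ∑ x, e (t * x ^ 2) = η t * gaussSum η e := by
  have hcount (a : F) : (({x : F | x ^ 2 = a} : Finset F).card : ℂ) = η a + 1 := by
    have := congrArg (Int.castRingHom ℂ) (quadraticChar_card_sqrts hF a)
    rwa [Set.toFinset_ofPred, map_natCast, map_add, map_one] at this
  calc ∑ x, e (t * x ^ 2) = ∑ a, ∑ x with x ^ 2 = a, e (t * a) := by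
        rw [← Finset.sum_fiberwise _ (fun x : F => x ^ 2)]
        refine Finset.sum_congr rfl fun a _ => Finset.sum_congr rfl fun x hx => ?_
        rw [(Finset.mem_filter.mp hx).2]
    _ = gaussSum η (e.mulShift t) + ∑ a, e (t * a) := by
        simp only [Finset.sum_const, nsmul_eq_mul, hcount, add_mul, one_mul, Finset.sum_add_distrib]
        rfl
    _ = gaussSum η (e.mulShift t) := by
        simp only [mul_comm t, AddChar.sum_mulShift t he, if_neg ht, Nat.cast_zero, add_zero]
    _ = η t * gaussSum η e := by
        rw [← Units.val_mk0 ht, gaussSum_mulShift_eq, isQuadratic_complexQuadraticChar.inv]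

theorem sum_addChar_quadratic (hF : ringChar F ≠ 2) {e : AddChar F ℂ} (he : e.IsPrimitive)
    {t : F} (ht : t ≠ 0) (s : F) :
    ∑ x, e (t * x ^ 2 + 2 * s * x) = η t * gaussSum η e * e (-(s ^ 2 / t)) := by
  rw [← sum_addChar_mul_sq hF he ht,
    ← Equiv.sum_comp (Equiv.addRight (s / t)) fun x => e (t * x ^ 2), Finset.sum_mul]
  refine Finset.sum_congr rfl fun x _ => ?_
  rw [← AddChar.map_add_eq_mul, Equiv.coe_addRight]
  congr 1
  field_simp
  ring

theorem sum_addChar_linear {e : AddChar F ℂ} (he : e.IsPrimitive) (s : F) :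
    ∑ x, e (s * x) = if s = 0 then (Fintype.card F : ℂ) else 0 := by
  simp only [mul_comm s, AddChar.sum_mulShift s he]
  split_ifs <;> simp

end QuadraticGaussSums

section WeilRepresentation

variable {F : Type} [Field F] [Fintype F] [DecidableEq F]

local notation "η" => complexQuadraticChar F

open Matrix.SpecialLinearGroup

/-- The matrix, indexed by `F`, by which `!![a, b; c, d] ∈ SL(2, F)` acts on functions on `F` in the
Weil representation attached to the additive character `e`. -/
def weilKernel (e : AddChar F ℂ) (a b c d : F) : Matrix F F ℂ :=
  .of fun x y =>
    if c = 0 then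
      if y = a * x then η a * e (a * b * x ^ 2) else 0
    else
      (gaussSum η e)⁻¹ * η c * e ((a * x ^ 2 + d * y ^ 2 - 2 * x * y) / c)

theorem weilKernel_zero_apply (e : AddChar F ℂ) (a b d x y : F) :
    weilKernel e a b 0 d x y = if y = a * x then η a * e (a * b * x ^ 2) else 0 :=
  if_pos rfl

theorem weilKernel_apply_of_ne_zero (e : AddChar F ℂ) {c : F} (hc : c ≠ 0) (a b d x y : F) :
    weilKernel e a b c d x y =
      (gaussSum η e)⁻¹ * η c * e ((a * x ^ 2 + d * y ^ 2 - 2 * x * y) / c) :=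
  if_neg hc

theorem weilKernel_neg_neg (e : AddChar F ℂ) (a b c d x y : F) :
    weilKernel e a b c d (-x) (-y) = weilKernel e a b c d x y := by
  simp only [weilKernel, Matrix.of_apply, mul_neg, neg_inj, neg_mul, neg_neg, neg_sq]

theorem weilKernel_upper (e : AddChar F ℂ) (t : F) :
    weilKernel e 1 t 0 1 = Matrix.diagonal fun x => e (t * x ^ 2) := by
  ext x y
  simp [weilKernel_zero_apply, Matrix.diagonal_apply, eq_comm]

theorem weilKernel_upper_mul (e : AddChar F ℂ) {a b c d : F} (hdet : a * d - b * c = 1) (t : F) :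
    weilKernel e (a + t * c) (b + t * d) c d =
      weilKernel e 1 t 0 1 * weilKernel e a b c d := by
  ext x y
  rw [weilKernel_upper, Matrix.diagonal_mul]
  by_cases hc : c = 0
  · subst hc
    rw [weilKernel_zero_apply, weilKernel_zero_apply, mul_zero, add_zero, mul_ite, mul_zero,
      mul_left_comm, ← AddChar.map_add_eq_mul]
    congr 4
    linear_combination t * x ^ 2 * hdet
  · rw [weilKernel_apply_of_ne_zero e hc, weilKernel_apply_of_ne_zero e hc, mul_left_comm,
      ← AddChar.map_add_eq_mul]
    congr 2
    field_simp
    ring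

theorem gaussSum_complexQuadraticChar_sq (hF : ringChar F ≠ 2) {e : AddChar F ℂ}
    (he : e.IsPrimitive) : gaussSum η e ^ 2 = η (-1) * Fintype.card F :=
  gaussSum_sq (complexQuadraticChar_ne_one hF) isQuadratic_complexQuadraticChar he

theorem gaussSum_complexQuadraticChar_ne_zero (hF : ringChar F ≠ 2) {e : AddChar F ℂ}
    (he : e.IsPrimitive) : gaussSum η e ≠ 0 :=
  gaussSum_ne_zero_of_nontrivial (Nat.cast_ne_zero.mpr Fintype.card_ne_zero)
    (complexQuadraticChar_ne_one hF) he

theorem weilKernel_weyl_apply (e : AddChar F ℂ) (x y : F) :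
    weilKernel e 0 1 (-1) 0 x y = (gaussSum η e)⁻¹ * η (-1) * e (2 * x * y) := by
  rw [weilKernel_apply_of_ne_zero e (neg_ne_zero.mpr one_ne_zero)]
  congr 2
  ring

theorem weilKernel_weyl_mul_of_eq_zero (e : AddChar F ℂ) {a : F} (ha : a ≠ 0) (b d : F) :
    weilKernel e 0 d (-a) (-b) = weilKernel e 0 1 (-1) 0 * weilKernel e a b 0 d := by
  ext x z
  have hz (y : F) : z = a * y ↔ y = z / a := by rw [eq_div_iff ha, eq_comm, mul_comm]
  simp only [Matrix.mul_apply, weilKernel_weyl_apply, weilKernel_zero_apply, hz, mul_ite, mul_zero,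
    Finset.sum_ite_eq', Finset.mem_univ, if_true]
  rw [weilKernel_apply_of_ne_zero e (neg_ne_zero.mpr ha), neg_eq_neg_one_mul a, map_mul,
    show (0 * x ^ 2 + -b * z ^ 2 - 2 * x * z) / (-1 * a) =
      2 * x * (z / a) + a * b * (z / a) ^ 2 by field_simp; ring, AddChar.map_add_eq_mul]
  ring

theorem weilKernel_weyl_mul_apply (e : AddChar F ℂ) (a b : F) {c : F} (hc : c ≠ 0) (d x z : F) :
    (weilKernel e 0 1 (-1) 0 * weilKernel e a b c d) x z =
      (gaussSum η e)⁻¹ ^ 2 * η (-1) * η c * e (d * z ^ 2 / c) *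
        ∑ y, e (a / c * y ^ 2 + 2 * (x - z / c) * y) := by
  simp only [Matrix.mul_apply, weilKernel_weyl_apply, weilKernel_apply_of_ne_zero e hc,
    Finset.mul_sum]
  refine Finset.sum_congr rfl fun y _ => ?_
  have hphase : e (2 * x * y) * e ((a * y ^ 2 + d * z ^ 2 - 2 * y * z) / c) =
      e (d * z ^ 2 / c) * e (a / c * y ^ 2 + 2 * (x - z / c) * y) := by
    rw [← AddChar.map_add_eq_mul, ← AddChar.map_add_eq_mul]
    congr 1
    ring
  linear_combination (gaussSum η e)⁻¹ ^ 2 * η (-1) * η c * hphase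

theorem weilKernel_weyl_mul_of_ne_zero (hF : ringChar F ≠ 2) {e : AddChar F ℂ}
    (he : e.IsPrimitive) {a b c d : F} (ha : a ≠ 0) (hc : c ≠ 0) (hdet : a * d - b * c = 1) :
    weilKernel e c d (-a) (-b) = weilKernel e 0 1 (-1) 0 * weilKernel e a b c d := by
  ext x z
  have hγ := gaussSum_complexQuadraticChar_ne_zero hF he
  have hη : η (-a) = η (-1) * (η (a / c) * η c) := by
    rw [← map_mul, ← map_mul, div_mul_cancel₀ a hc, neg_one_mul]
  have hphase : (c * x ^ 2 + -b * z ^ 2 - 2 * x * z) / -a =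
      d * z ^ 2 / c + -((x - z / c) ^ 2 / (a / c)) := by
    field_simp
    linear_combination (-z ^ 2) * hdet
  rw [weilKernel_weyl_mul_apply e a b hc, sum_addChar_quadratic hF he (div_ne_zero ha hc),
    weilKernel_apply_of_ne_zero e (neg_ne_zero.mpr ha), hη, hphase, AddChar.map_add_eq_mul]
  field_simp

theorem weilKernel_weyl_mul_zero (hF : ringChar F ≠ 2) {e : AddChar F ℂ} (he : e.IsPrimitive)
    {b c d : F} (hc : c ≠ 0) :
    weilKernel e c d 0 (-b) = weilKernel e 0 1 (-1) 0 * weilKernel e 0 b c d := by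
  ext x z
  have hγ := gaussSum_complexQuadraticChar_ne_zero hF he
  have hγ2 := gaussSum_complexQuadraticChar_sq hF he
  have hx : 2 * (x - z / c) = 0 ↔ z = c * x := by
    rw [mul_eq_zero_iff_left (Ring.two_ne_zero hF), sub_eq_zero, eq_div_iff hc, eq_comm, mul_comm]
  simp only [weilKernel_weyl_mul_apply e 0 b hc, zero_div, zero_mul, zero_add,
    sum_addChar_linear he, hx, weilKernel_zero_apply, mul_ite, mul_zero]
  split_ifs with h
  · rw [h, show d * (c * x) ^ 2 / c = c * d * x ^ 2 by field_simp]
    field_simp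
    rw [hγ2, mul_assoc _ (η (-1))]
  · rfl

theorem weilKernel_weyl_mul (hF : ringChar F ≠ 2) {e : AddChar F ℂ} (he : e.IsPrimitive)
    {a b c d : F} (hdet : a * d - b * c = 1) :
    weilKernel e c d (-a) (-b) = weilKernel e 0 1 (-1) 0 * weilKernel e a b c d := by
  rcases eq_or_ne a 0 with rfl | ha
  · have hc : c ≠ 0 := by
      rintro rfl
      simp at hdet
    rw [neg_zero, weilKernel_weyl_mul_zero hF he hc]
  rcases eq_or_ne c 0 with rfl | hc
  · exact weilKernel_weyl_mul_of_eq_zero e ha b d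
  · exact weilKernel_weyl_mul_of_ne_zero hF he ha hc hdet

/-- `weilKernel` as a function on the special linear group. -/
def weilMatrix (e : AddChar F ℂ) (A : Matrix.SpecialLinearGroup (Fin 2) F) : Matrix F F ℂ :=
  weilKernel e (A 0 0) (A 0 1) (A 1 0) (A 1 1)

theorem weilMatrix_weylElement (e : AddChar F ℂ) :
    weilMatrix e (weylElement F) = weilKernel e 0 1 (-1) 0 := rfl

theorem weilMatrix_upper (e : AddChar F ℂ) (t : F) :
    weilMatrix e (transvection zero_ne_one t) = weilKernel e 1 t 0 1 := by
  simp [weilMatrix, transvection_coe]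

theorem weilMatrix_upper_mul (e : AddChar F ℂ) (t : F)
    (A : Matrix.SpecialLinearGroup (Fin 2) F) :
    weilMatrix e (transvection zero_ne_one t * A) =
      weilMatrix e (transvection zero_ne_one t) * weilMatrix e A := by
  rw [weilMatrix_upper, weilMatrix, weilMatrix,
    ← weilKernel_upper_mul e ((Matrix.det_fin_two A.1).symm.trans A.2)]
  simp [transvection_coe, Matrix.add_mul]

theorem weilMatrix_weylElement_mul (hF : ringChar F ≠ 2) {e : AddChar F ℂ} (he : e.IsPrimitive)
    (A : Matrix.SpecialLinearGroup (Fin 2) F) :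
    weilMatrix e (weylElement F * A) = weilMatrix e (weylElement F) * weilMatrix e A := by
  rw [weilMatrix_weylElement, weilMatrix, weilMatrix,
    ← weilKernel_weyl_mul hF he ((Matrix.det_fin_two A.1).symm.trans A.2)]
  simp [coe_weylElement, Matrix.mul_apply]

theorem weilMatrix_one (e : AddChar F ℂ) : weilMatrix e 1 = 1 := by
  rw [← transvection_coeff_zero (zero_ne_one' (Fin 2)), weilMatrix_upper, weilKernel_upper]
  simp

theorem weilMatrix_mul (hF : ringChar F ≠ 2) {e : AddChar F ℂ} (he : e.IsPrimitive)
    (A B : Matrix.SpecialLinearGroup (Fin 2) F) :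
    weilMatrix e (A * B) = weilMatrix e A * weilMatrix e B := by
  induction A using SL2_induction generalizing B with
  | upper t => exact weilMatrix_upper_mul e t B
  | weyl => exact weilMatrix_weylElement_mul hF he B
  | mul A A' hA hA' => rw [mul_assoc, hA, hA', hA, mul_assoc]

end WeilRepresentation

section OddPart

/-- `r` lists the nonzero elements of `F` up to sign, each pair `{x, -x}` once; the
additional point of `Option` accounts for `0`. -/
structure IsHalfSystem {F ι : Type*} [AddGroup F] (r : ι → F) : Prop where
  bijective : Function.Bijective (Option.elim · 0 (Sum.elim r (-r)))

namespace IsHalfSystem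

variable {F ι : Type*} [AddGroup F] {r : ι → F}

theorem injective (hr : IsHalfSystem r) : Function.Injective r := fun i j h => by
  simpa using @hr.bijective.1 (some (.inl i)) (some (.inl j)) h

theorem ne_neg (hr : IsHalfSystem r) (i j : ι) : r i ≠ -r j := fun h => by
  simpa using @hr.bijective.1 (some (.inl i)) (some (.inr j)) h

theorem ne_zero (hr : IsHalfSystem r) (i : ι) : r i ≠ 0 := fun h =>
  hr.ne_neg i i (by rw [h, neg_zero])

theorem sum_eq [Fintype F] [Fintype ι] {R : Type*} [AddCommMonoid R] (hr : IsHalfSystem r)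
    (f : F → R) : ∑ x, f x = f 0 + ∑ i, (f (r i) + f (-r i)) := by
  rw [← hr.bijective.sum_comp f, Fintype.sum_option, Fintype.sum_sum_type,
    Finset.sum_add_distrib]
  rfl

end IsHalfSystem

variable {F ι R : Type*} [AddGroup F] [CommRing R]

/-- The matrix of the action on odd functions of a matrix invariant under `x ↦ -x`, in the
coordinates given by a half system `r`. -/
def oddPart (r : ι → F) (A : Matrix F F R) : Matrix ι ι R :=
  .of fun i j => A (r i) (r j) - A (r i) (-r j)

theorem oddPart_diagonal [DecidableEq F] [DecidableEq ι] {r : ι → F} (hr : IsHalfSystem r)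
    (d : F → R) : oddPart r (Matrix.diagonal d) = Matrix.diagonal fun i => d (r i) := by
  ext i j
  simp [oddPart, Matrix.diagonal_apply, hr.ne_neg, hr.injective.eq_iff]

theorem oddPart_mul [Fintype F] [Fintype ι] {r : ι → F} (hr : IsHalfSystem r)
    {A B : Matrix F F R} (hB : ∀ x y, B (-x) (-y) = B x y) :
    oddPart r (A * B) = oddPart r A * oddPart r B := by
  ext i j
  have hB' (x y : F) : B (-x) y = B x (-y) := by rw [← hB x (-y), neg_neg]
  simp only [oddPart, Matrix.of_apply, Matrix.mul_apply, ← Finset.sum_sub_distrib]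
  rw [hr.sum_eq, ← hB' 0 (r j), neg_zero, sub_self, zero_add]
  refine Finset.sum_congr rfl fun k _ => ?_
  rw [hB', hB]
  ring

end OddPart

section OddWeilRepresentation

open Matrix.SpecialLinearGroup

variable {F : Type} [Field F] [Fintype F] [DecidableEq F] {ι : Type} [Fintype ι] [DecidableEq ι]
  {e : AddChar F ℂ} {r : ι → F}

local notation "η" => complexQuadraticChar F

/-- The Weil representation on odd functions, of degree `(|F| - 1) / 2`. -/
def oddWeilRepresentation (hF : ringChar F ≠ 2) (he : e.IsPrimitive) (hr : IsHalfSystem r) :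
    Matrix.SpecialLinearGroup (Fin 2) F →* Matrix ι ι ℂ where
  toFun A := oddPart r (weilMatrix e A)
  map_one' := by
    rw [weilMatrix_one, ← Matrix.diagonal_one, oddPart_diagonal hr, Matrix.diagonal_one]
  map_mul' A B := (congrArg (oddPart r) (weilMatrix_mul hF he A B)).trans <|
    oddPart_mul hr fun _ _ => weilKernel_neg_neg ..

variable (hF : ringChar F ≠ 2) (he : e.IsPrimitive) (hr : IsHalfSystem r)

theorem oddWeilRepresentation_upper (t : F) :
    oddWeilRepresentation hF he hr (transvection zero_ne_one t) =
      Matrix.diagonal fun i => e (t * r i ^ 2) := by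
  rw [← oddPart_diagonal hr fun x => e (t * x ^ 2), ← weilKernel_upper, ← weilMatrix_upper]
  rfl

theorem oddWeilRepresentation_weylElement (i j : ι) :
    oddWeilRepresentation hF he hr (weylElement F) i j =
      (gaussSum η e)⁻¹ * η (-1) * (e (2 * r i * r j) - e (-(2 * r i * r j))) := by
  rw [mul_sub, ← weilKernel_weyl_apply, ← mul_neg, ← weilKernel_weyl_apply]
  rfl

theorem oddWeilRepresentation_neg_one :
    oddWeilRepresentation hF he hr (-1) = -η (-1) • (1 : Matrix ι ι ℂ) := by
  ext i j
  change weilMatrix e (-1) (r i) (r j) - weilMatrix e (-1) (r i) (-r j) = _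
  simp [weilMatrix, weilKernel_zero_apply, Matrix.one_apply, hr.injective.eq_iff, hr.ne_neg,
    eq_comm, neg_ite]

theorem oddWeilRepresentation_weylElement_ne_zero (hinj : Function.Injective e) (i j : ι) :
    oddWeilRepresentation hF he hr (weylElement F) i j ≠ 0 := by
  rw [oddWeilRepresentation_weylElement]
  refine mul_ne_zero (mul_ne_zero (inv_ne_zero ?_) (isUnit_one.neg.map (η)).ne_zero)
    (sub_ne_zero.mpr fun h => ?_)
  · exact gaussSum_complexQuadraticChar_ne_zero hF he
  · have : 2 * 2 * (r i * r j) = 0 := by linear_combination hinj h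
    simp [Ring.two_ne_zero hF, hr.ne_zero] at this

theorem isIrrChar_trace_oddWeilRepresentation [Nonempty ι] (hinj : Function.Injective e) :
    IsIrrChar fun A => (oddWeilRepresentation hF he hr A).trace := by
  refine isIrrChar_trace_of_diagonal (oddWeilRepresentation_upper hF he hr 1) (fun i j hij => ?_)
    (oddWeilRepresentation_weylElement_ne_zero hF he hr hinj (Classical.arbitrary ι))
  have hsq := hinj hij
  rw [one_mul, one_mul, sq_eq_sq_iff_eq_or_eq_neg] at hsq
  exact hr.injective (hsq.resolve_right (hr.ne_neg i j))

theorem two_mul_trace_oddWeilRepresentation_upper {t : F} (ht : t ≠ 0) :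
    2 * (oddWeilRepresentation hF he hr (transvection zero_ne_one t)).trace + 1 =
      η t * gaussSum η e := by
  rw [← sum_addChar_mul_sq hF he ht, hr.sum_eq, oddWeilRepresentation_upper, Matrix.trace_diagonal]
  simp [← two_mul, Finset.mul_sum, add_comm]

theorem trace_oddWeilRepresentation_mulShift_ne {t : F} (ht : t ≠ 0) (hη : η t ≠ 1)
    (he' : (e.mulShift t).IsPrimitive) :
    (oddWeilRepresentation hF he' hr (transvection zero_ne_one 1)).trace ≠
      (oddWeilRepresentation hF he hr (transvection zero_ne_one 1)).trace := fun h => hη <| by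
  have h1 := two_mul_trace_oddWeilRepresentation_upper hF he hr one_ne_zero
  have ht := two_mul_trace_oddWeilRepresentation_upper hF he hr ht
  have htrace : (oddWeilRepresentation hF he' hr (transvection zero_ne_one 1)).trace =
      (oddWeilRepresentation hF he hr (transvection zero_ne_one t)).trace := by
    simp [oddWeilRepresentation_upper]
  rw [map_one, ← h, htrace, ht] at h1
  exact mul_right_cancel₀ (gaussSum_complexQuadraticChar_ne_zero hF he) h1

end OddWeilRepresentation

section SymmetricPower

open Polynomial

variable {R : Type*} [CommSemiring R]

/-- The image of `x ^ j * y ^ (n - j)` under the substitution given by the columns of `A`,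
dehomogenized at `y = 1`. -/
def symPowerColumn (n : ℕ) (A : Matrix (Fin 2) (Fin 2) R) (j : ℕ) : R[X] :=
  (C (A 0 0) * X + C (A 1 0)) ^ j * (C (A 0 1) * X + C (A 1 1)) ^ (n - j)

theorem sum_coeff_symPowerColumn {S : Type*} [CommSemiring S] [Algebra R S] {n j : ℕ} (hj : j ≤ n)
    (A : Matrix (Fin 2) (Fin 2) R) (u v : S) :
    ∑ k : Fin (n + 1), (symPowerColumn n A j).coeff k • (u ^ (k : ℕ) * v ^ (n - k)) =
      (A 0 0 • u + A 1 0 • v) ^ j * (A 0 1 • u + A 1 1 • v) ^ (n - j) := by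
  let q : MvPolynomial (Fin 2) R :=
    (A 0 0 • .X 0 + A 1 0 • .X 1) ^ j * (A 0 1 • .X 0 + A 1 1 • .X 1) ^ (n - j)
  have hlinear (a b : R) : (a • .X 0 + b • .X 1 : MvPolynomial (Fin 2) R).IsHomogeneous 1 := by
    simp only [MvPolynomial.smul_eq_C_mul]
    exact ((MvPolynomial.isHomogeneous_X R 0).C_mul a).add
      ((MvPolynomial.isHomogeneous_X R 1).C_mul b)
  have hhom : q.IsHomogeneous n := by
    have := ((hlinear (A 0 0) (A 1 0)).pow j).mul ((hlinear (A 0 1) (A 1 1)).pow (n - j))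
    rwa [one_mul, one_mul, Nat.add_sub_cancel' hj] at this
  have hq : (symPowerColumn n A j).homogenize n = q :=
    Polynomial.homogenize_eq_of_isHomogeneous hhom (by simp [q, symPowerColumn, smul_eq_C_mul])
  have := congrArg (MvPolynomial.aeval ![u, v]) hq
  simpa [q, homogenize, Finset.Nat.sum_antidiagonal_eq_sum_range_succ_mk, Finset.sum_range,
    MvPolynomial.aeval_monomial, Algebra.smul_def] using this

/-- The `n`-th symmetric power of a matrix of size two, in the basis `x ^ j * y ^ (n - j)`. -/
def symPower (n : ℕ) : Matrix (Fin 2) (Fin 2) R →* Matrix (Fin (n + 1)) (Fin (n + 1)) R where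
  toFun A := .of fun i j => (symPowerColumn n A j).coeff i
  map_one' := by
    ext i j
    simp [symPowerColumn, coeff_X_pow, Matrix.one_apply, Fin.ext_iff]
  map_mul' A B := by
    ext i j
    have hsub : symPowerColumn n (A * B) j =
        ∑ k : Fin (n + 1), (symPowerColumn n B j).coeff k • symPowerColumn n A k := by
      refine .trans ?_ (sum_coeff_symPowerColumn (Nat.le_of_lt_succ j.2) B _ _).symm
      simp only [symPowerColumn, Matrix.mul_apply, Fin.sum_univ_two, smul_eq_C_mul, C_add, C_mul]
      ring
    simp [hsub, Matrix.mul_apply, mul_comm]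

theorem symPower_diagonal (n : ℕ) (d : Fin 2 → R) :
    symPower n (Matrix.diagonal d) =
      Matrix.diagonal fun i : Fin (n + 1) => d 0 ^ (i : ℕ) * d 1 ^ (n - i) := by
  ext i j
  have hcolumn : symPowerColumn n (Matrix.diagonal d) j =
      C (d 0 ^ (j : ℕ) * d 1 ^ (n - j)) * X ^ (j : ℕ) := by
    simp [symPowerColumn, mul_pow, mul_right_comm]
  change (symPowerColumn n (Matrix.diagonal d) j).coeff i = _
  rw [hcolumn, coeff_C_mul_X_pow, Matrix.diagonal_apply]
  exact ite_congr (propext Fin.ext_iff.symm) (fun h => by rw [h]) fun _ => rfl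

theorem symPower_zero_apply (n : ℕ) (A : Matrix (Fin 2) (Fin 2) R) (j : Fin (n + 1)) :
    symPower n A 0 j = A 1 0 ^ (j : ℕ) * A 1 1 ^ (n - j) := by
  simp [symPower, symPowerColumn, coeff_zero_eq_eval_zero]

end SymmetricPower

section OddCharacters

open Matrix.SpecialLinearGroup

/-- An irreducible character of degree `n` of `SL(2, R)` on which `-1` acts as `-1`. -/
structure IsOddIrrChar {R : Type} [CommRing R] [Fintype R] [DecidableEq R] (n : ℕ)
    (ψ : Matrix.SpecialLinearGroup (Fin 2) R → ℂ) : Prop where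
  isIrrChar : IsIrrChar ψ
  apply_one : ψ 1 = n
  apply_neg_one : ψ (-1) = -n

theorem addChar_isPrimitive_of_injective {R R' : Type*} [CommRing R] [CommMonoid R']
    {e : AddChar R R'} (hinj : Function.Injective e) : e.IsPrimitive := fun a ha h =>
  ha <| hinj <| by simpa using DFunLike.congr_fun h 1

instance fact_prime_five : Fact (Nat.Prime 5) :=
  ⟨Nat.prime_five⟩

theorem ringChar_zmod_five_ne_two : ringChar (ZMod 5) ≠ 2 := by
  rw [ZMod.ringChar_zmod_n]
  decide

theorem isHalfSystem_one_two : IsHalfSystem (![1, 2] : Fin 2 → ZMod 5) :=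
  ⟨by decide⟩

theorem complexQuadraticChar_neg_one_zmod_five : complexQuadraticChar (ZMod 5) (-1) = 1 := by
  have : quadraticChar (ZMod 5) (-1) = 1 := by decide
  simp [complexQuadraticChar, this]

theorem complexQuadraticChar_two_zmod_five : complexQuadraticChar (ZMod 5) 2 = -1 := by
  have : quadraticChar (ZMod 5) 2 = -1 := by decide
  simp [complexQuadraticChar, this]

variable {e : AddChar (ZMod 5) ℂ}

/-- The odd part of the Weil representation of `SL(2, 5)`, of degree two. -/
def oddWeilFive (hinj : Function.Injective e) :
    Matrix.SpecialLinearGroup (Fin 2) (ZMod 5) →* Matrix (Fin 2) (Fin 2) ℂ :=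
  oddWeilRepresentation ringChar_zmod_five_ne_two (addChar_isPrimitive_of_injective hinj)
    isHalfSystem_one_two

theorem oddWeilFive_neg_one (hinj : Function.Injective e) :
    oddWeilFive hinj (-1) = Matrix.diagonal fun _ => -1 := by
  rw [oddWeilFive, oddWeilRepresentation_neg_one, complexQuadraticChar_neg_one_zmod_five,
    ← Matrix.diagonal_one, ← Matrix.diagonal_smul]
  simp

theorem isOddIrrChar_trace_oddWeilFive (hinj : Function.Injective e) :
    IsOddIrrChar 2 fun A => (oddWeilFive hinj A).trace where
  isIrrChar := isIrrChar_trace_oddWeilRepresentation _ _ isHalfSystem_one_two hinj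
  apply_one := by simp
  apply_neg_one := by simp [oddWeilFive_neg_one]

theorem isOddIrrChar_trace_symPower_oddWeilFive (hinj : Function.Injective e) :
    IsOddIrrChar 4 fun A => (symPower 3 (oddWeilFive hinj A)).trace where
  isIrrChar := by
    have hupper : symPower 3 (oddWeilFive hinj (transvection zero_ne_one 1)) =
        Matrix.diagonal fun i : Fin 4 => e ((i : ℕ) • 1 + (3 - i : ℕ) • 4) := by
      simp only [AddChar.map_add_eq_mul, AddChar.map_nsmul_eq_pow]
      rw [oddWeilFive, oddWeilRepresentation_upper, symPower_diagonal]
      rfl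
    refine isIrrChar_trace_of_diagonal (ρ := (symPower 3).comp (oddWeilFive hinj)) hupper
      (hinj.comp (by decide)) (w := weylElement (ZMod 5)) (i := 0) fun j => ?_
    have hweyl (i j : Fin 2) : oddWeilFive hinj (weylElement (ZMod 5)) i j ≠ 0 :=
      oddWeilRepresentation_weylElement_ne_zero _ _ _ hinj i j
    rw [MonoidHom.comp_apply, symPower_zero_apply]
    exact mul_ne_zero (pow_ne_zero _ (hweyl 1 0)) (pow_ne_zero _ (hweyl 1 1))
  apply_one := by simp
  apply_neg_one := by
    norm_num [oddWeilFive_neg_one, symPower_diagonal, Fin.sum_univ_succ]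

theorem exists_card_eq_two_isOddIrrChar :
    ∃ J : Finset (Matrix.SpecialLinearGroup (Fin 2) (ZMod 5) → ℂ),
      J.card = 2 ∧ ∀ ψ ∈ J, IsOddIrrChar 2 ψ := by
  have hinj : Function.Injective (ZMod.stdAddChar : AddChar (ZMod 5) ℂ) :=
    ZMod.injective_stdAddChar
  have hinj' : Function.Injective ((ZMod.stdAddChar : AddChar (ZMod 5) ℂ).mulShift 2) :=
    hinj.comp (by decide : Function.Injective (2 * · : ZMod 5 → ZMod 5))
  refine ⟨{fun A => (oddWeilFive hinj' A).trace, fun A => (oddWeilFive hinj A).trace},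
    Finset.card_pair fun h => ?_, ?_⟩
  · have hη : complexQuadraticChar (ZMod 5) 2 ≠ 1 := by
      rw [complexQuadraticChar_two_zmod_five]
      norm_num
    exact trace_oddWeilRepresentation_mulShift_ne _ _ _ (by decide) hη _
      (congrFun h (transvection zero_ne_one 1))
  · simp only [Finset.mem_insert, Finset.mem_singleton, forall_eq_or_imp, forall_eq]
    exact ⟨isOddIrrChar_trace_oddWeilFive hinj', isOddIrrChar_trace_oddWeilFive hinj⟩

end OddCharacters

section CentralProductWithSL2

variable {G : Type} [Group G] {M C : Subgroup G}

theorem isCentralProduct_centralizer (h : M ⊔ Subgroup.centralizer (M : Set G) = ⊤) :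
    IsCentralProduct M (Subgroup.centralizer (M : Set G)) :=
  ⟨fun m c => Subgroup.mem_centralizer_iff.mp c.2 m m.2, h⟩

namespace IsCentralProduct

theorem mulEquiv_apply_eq_one_or_eq_neg_one (hMC : IsCentralProduct M C) {R : Type*} [CommRing R]
    [IsDomain R] (e : M ≃* Matrix.SpecialLinearGroup (Fin 2) R) {t : M} (ht : (t : G) ∈ C) :
    e t = 1 ∨ e t = -1 := by
  refine eq_one_or_eq_neg_one_of_mem_center_SL2 (Subgroup.mem_center_iff.mpr fun A => ?_)
  have hcomm : e.symm A * t = t * e.symm A := Subtype.ext (hMC.commute (e.symm A) ⟨t, ht⟩)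
  simpa using congrArg e hcomm

theorem apply_mulEquiv_eq_mul (hMC : IsCentralProduct M C) {R : Type*} [CommRing R] [IsDomain R]
    (e : M ≃* Matrix.SpecialLinearGroup (Fin 2) R) {μ : C →* ℂ}
    (hμ : ∃ (s : M) (hs : (s : G) ∈ C), μ ⟨s, hs⟩ ≠ 1)
    {ψ : Matrix.SpecialLinearGroup (Fin 2) R → ℂ} (hψ : ψ (-1) = -ψ 1) {t : M}
    (ht : (t : G) ∈ C) : ψ (e t) = ψ 1 * μ ⟨t, ht⟩ := by
  have hμ_one {s : M} (hs : (s : G) ∈ C) (hes : e s = 1) : μ ⟨s, hs⟩ = 1 := by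
    obtain rfl := (map_eq_one_iff e e.injective).mp hes
    exact map_one μ
  rcases hMC.mulEquiv_apply_eq_one_or_eq_neg_one e ht with het | het
  · rw [het, hμ_one ht het, mul_one]
  obtain ⟨s, hs, hμs⟩ := hμ
  have hes : e s = -1 :=
    (hMC.mulEquiv_apply_eq_one_or_eq_neg_one e hs).resolve_left fun h => hμs (hμ_one hs h)
  obtain rfl : s = t := e.injective (hes.trans het.symm)
  have hsq : μ ⟨s, hs⟩ * μ ⟨s, hs⟩ = 1 := by
    rw [← map_mul]
    exact hμ_one (s := s * s) (C.mul_mem hs hs) (by simp [hes])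
  rw [hes, hψ, (mul_self_eq_one_iff.mp hsq).resolve_left hμs, mul_neg_one]

theorem isPrimitive_of_mulEquiv_SL2 [Fintype G] (hMC : IsCentralProduct M C) {p : ℕ}
    [Fact p.Prime] (e : M ≃* Matrix.SpecialLinearGroup (Fin 2) (ZMod p)) {n : ℕ} (hn : n < p)
    {χ : G → ℂ} (hχ : IsIrrChar fun m : M => χ m) (hdeg : χ 1 = n) : IsPrimitive χ :=
  hMC.isPrimitive_of_isIrrChar_restrict
    (fun _ hK => eq_top_of_index_lt_of_mulEquiv_SL2 e (hK.trans_lt hn)) hχ hdeg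

theorem card_mul_card_quotient_chars_le_card_primitive [Fintype G] [M.Normal]
    (hMC : IsCentralProduct M C) {p : ℕ} [Fact p.Prime]
    (e : M ≃* Matrix.SpecialLinearGroup (Fin 2) (ZMod p)) {μ : C →* ℂ}
    (hμ : ∃ (s : M) (hs : (s : G) ∈ C), μ ⟨s, hs⟩ ≠ 1) {n : ℕ} (hn : n < p)
    {J : Finset (Matrix.SpecialLinearGroup (Fin 2) (ZMod p) → ℂ)}
    (hJ : ∀ ψ ∈ J, IsOddIrrChar n ψ) {S : Finset (G → ℂ)}
    (hS : ∀ χ : G → ℂ, IsIrrChar χ ∧ IsPrimitive χ ∧ χ 1 = n ∧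
      (∃ t : (M ⊓ C : Subgroup G), χ t ≠ χ 1) → χ ∈ S) :
    J.card * Nat.card ((G ⧸ M) →* ℂ) ≤ S.card := by
  let I : Finset (M → ℂ) := J.image (· ∘ e)
  have hcard : I.card = J.card :=
    Finset.card_image_of_injective _ e.surjective.injective_comp_right
  have hI : ∀ ψ ∈ I, IsIrrChar ψ := Finset.forall_mem_image.mpr fun ψ hψ =>
    (hJ ψ hψ).isIrrChar.comp_mulEquiv e
  have hagree {ψ} (hψ : ψ ∈ J) {t : M} (ht : (t : G) ∈ C) : ψ (e t) = ψ 1 * μ ⟨t, ht⟩ :=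
    hMC.apply_mulEquiv_eq_mul e hμ (by rw [(hJ ψ hψ).apply_neg_one, (hJ ψ hψ).apply_one]) ht
  rw [← hcard]
  refine hMC.card_mul_card_quotient_chars_le μ hI
    (Finset.forall_mem_image.mpr fun ψ hψ t hM hC => ?_) fun χ hχ hχI => ?_
  · rw [Function.comp_apply, Function.comp_apply, map_one, hagree hψ (t := ⟨t, hM⟩) hC]
  obtain ⟨ψ, hψ, hψχ⟩ := Finset.mem_image.mp hχI
  have hχM (m : M) : χ m = ψ (e m) := (congrFun hψχ m).symm
  have hχ_one : χ 1 = n := by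
    rw [← (hJ ψ hψ).apply_one, ← map_one e, ← hχM, Subgroup.coe_one]
  obtain ⟨s, hs, hμs⟩ := hμ
  refine hS χ ⟨hχ, hMC.isPrimitive_of_mulEquiv_SL2 e hn (hI _ hχI) hχ_one, hχ_one,
    ⟨s, s.2, hs⟩, fun hker => hμs ?_⟩
  obtain ⟨k, hk, hχk⟩ := hχ.exists_apply_one_eq_natCast
  have hχ_ne : χ 1 ≠ 0 := hχk ▸ Nat.cast_ne_zero.mpr hk.ne'
  have hψ_one : ψ 1 = χ 1 := (hJ ψ hψ).apply_one.trans hχ_one.symm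
  refine mul_left_cancel₀ hχ_ne ?_
  rw [mul_one, ← hψ_one, ← hagree hψ hs, ← hχM, hψ_one]
  exact hker

end IsCentralProduct

end CentralProductWithSL2

/-- In a central product `G = M·C_G(M)` with `M ≅ SL(2,5)` and `T = M ∩ C = Z(M) ≅ C₂`,
if the nontrivial character `λ` of `T` extends to a linear character of `C`, then every
extension to `G` of a `ψ ∈ Irr(M|λ)` of degree 2 or 4 is primitive; in particular `G`
has at least `2·n₁(G/M)` primitive irreducible characters of degree 2 and at least
`n₁(G/M)` of degree 4 not containing `T` in their kernel. -/
theorem SL25_central_product_primitive_chars (G : Type) [Group G] [Fintype G]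
    (M : Subgroup G) [M.Normal]
    (eM : M ≃* Matrix.SpecialLinearGroup (Fin 2) (ZMod 5))
    (C T : Subgroup G) (hC : C = Subgroup.centralizer (M : Set G))
    (hG : M ⊔ C = ⊤) (hT : T = M ⊓ C) (hTcard : Nat.card T = 2)
    (lam : T →* ℂ) (hlamnt : lam ≠ 1)
    (hext : ∃ μ : C →* ℂ, ∀ (t : G) (ht : t ∈ T),
      μ ⟨t, (Subgroup.mem_inf.mp (hT ▸ ht)).2⟩ = lam ⟨t, ht⟩) :
    (∀ ψ : M → ℂ, IsIrrChar ψ →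
      (∀ (t : G) (ht : t ∈ T),
        ψ ⟨t, (Subgroup.mem_inf.mp (hT ▸ ht)).1⟩ = ψ 1 * lam ⟨t, ht⟩) →
      (ψ 1 = 2 ∨ ψ 1 = 4) →
      ∀ χ : G → ℂ, IsIrrChar χ → (∀ m : M, χ m = ψ m) → IsPrimitive χ) ∧
    (∀ S2 S4 : Finset (G → ℂ),
      (∀ χ, χ ∈ S2 ↔ IsIrrChar χ ∧ IsPrimitive χ ∧ χ 1 = 2 ∧
        ∃ t : T, χ (t : G) ≠ χ 1) →
      (∀ χ, χ ∈ S4 ↔ IsIrrChar χ ∧ IsPrimitive χ ∧ χ 1 = 4 ∧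
        ∃ t : T, χ (t : G) ≠ χ 1) →
      2 * Nat.card ((G ⧸ M) →* ℂ) ≤ S2.card ∧
        Nat.card ((G ⧸ M) →* ℂ) ≤ S4.card) := by
  subst hC hT
  have hMC := isCentralProduct_centralizer hG
  obtain ⟨μ, hμ⟩ := hext
  have hμ_ne : ∃ (s : M) (hs : (s : G) ∈ Subgroup.centralizer M), μ ⟨s, hs⟩ ≠ 1 := by
    obtain ⟨t, ht⟩ := DFunLike.ne_iff.mp hlamnt
    exact ⟨⟨t, t.2.1⟩, t.2.2, hμ t t.2 ▸ ht⟩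
  refine ⟨fun ψ hψ _ hdeg χ _ hχψ => ?_, fun S2 S4 hS2 hS4 => ⟨?_, ?_⟩⟩
  · obtain ⟨n, hn, hψn⟩ : ∃ n : ℕ, n < 5 ∧ ψ 1 = n := by
      rcases hdeg with h | h
      exacts [⟨2, by norm_num, h⟩, ⟨4, by norm_num, h⟩]
    exact hMC.isPrimitive_of_mulEquiv_SL2 eM hn (by simpa only [hχψ] using hψ)
      ((hχψ 1).trans hψn)
  · obtain ⟨J, hJcard, hJ⟩ := exists_card_eq_two_isOddIrrChar
    rw [← hJcard]
    exact hMC.card_mul_card_quotient_chars_le_card_primitive eM hμ_ne (by norm_num) hJ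
      fun χ => (hS2 χ).mpr
  · have hψ := isOddIrrChar_trace_symPower_oddWeilFive ZMod.injective_stdAddChar
    simpa only [Finset.card_singleton, one_mul] using
      hMC.card_mul_card_quotient_chars_le_card_primitive eM hμ_ne (by norm_num)
        (fun _ h => Finset.eq_of_mem_singleton h ▸ hψ) fun χ => (hS4 χ).mpr
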